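/- Let f = x^b + B_{b−2}x^{b−2} + ⋯ + B_1x + B_0 ∈ S[x] with b ≥ 2 and B_i ∈ S for all i. Then the Rees algebra Diff(S[x][fW^b]) ∩ S[W] over S (the elimination algebra of the hypersurface V(f) relative to the projection forgetting x) coincides, up to integral closure, with Diff_S(S[B_{b−2}W^2, B_{b−3}W^3, …, B_0W^b]): these two Rees algebras over S have the same integral closure inside Frac(S)[W]. -/

import Mathlib

open Polynomial
open scoped ENNReal

noncomputable section

namespace NashMult

/-- The `m`-adic order `ν(f)` of an element `f` of a ring: the largest `n` with `f ∈ m ^ n`. -/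
def adicOrder {R : Type*} [CommRing R] (m : Ideal R) (f : R) : ℕ :=
  sSup {n : ℕ | f ∈ m ^ n}

/-- A subalgebra `G ⊆ R[W]` is *graded* if it is spanned by its "monomials", i.e. it is closed
under taking homogeneous components.  This is the condition expressing that `G = ⊕ I_l W^l`
for a family of ideals `I_l` (with `I_0 = R` and `I_i · I_j ⊆ I_{i+j}` automatic). -/
def Graded {R : Type*} [CommRing R] (G : Subalgebra R (Polynomial R)) : Prop :=
  ∀ p ∈ G, ∀ n : ℕ, (C (p.coeff n) * X ^ n : Polynomial R) ∈ G

/-- A *Rees algebra* over `R`: a finitely generated graded subalgebra of `R[W]`. -/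
def IsReesAlgebra {R : Type*} [CommRing R] (G : Subalgebra R (Polynomial R)) : Prop :=
  G.FG ∧ Graded G

/-- The order of (the Rees algebra) `G` at the closed point of the local ring `(R, m)`:
`ord(G) = inf { ν(f)/n : f W^n a homogeneous element of G, n ≥ 1, f ≠ 0 }`
(with value `∞` for the empty infimum). -/
def reesOrder {R : Type*} [CommRing R] (m : Ideal R) (G : Subalgebra R (Polynomial R)) : ℝ≥0∞ :=
  sInf {q : ℝ≥0∞ | ∃ (f : R) (n : ℕ), f ≠ 0 ∧ 1 ≤ n ∧ (C f * X ^ n : Polynomial R) ∈ G ∧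
    q = (adicOrder m f : ℝ≥0∞) / (n : ℝ≥0∞)}

/-- `G = ⊕ I_l W^l` is *differentially closed* relative to a family `D` of derivations if
`I_{l+1} ⊆ I_l` and `D_j (I_l) ⊆ I_{l-1}` for all `l ≥ 1` and all `j`. -/
def DiffClosed {k R ι : Type*} [CommRing k] [CommRing R] [Algebra k R]
    (D : ι → Derivation k R R) (G : Subalgebra R (Polynomial R)) : Prop :=
  (∀ (f : R) (l : ℕ), 1 ≤ l → (C f * X ^ (l + 1) : Polynomial R) ∈ G →
      (C f * X ^ l : Polynomial R) ∈ G) ∧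
  (∀ (f : R) (l : ℕ) (j : ι), (C f * X ^ (l + 1) : Polynomial R) ∈ G →
      (C (D j f) * X ^ l : Polynomial R) ∈ G)

/-- `Diff(M)`: the smallest graded differentially closed subalgebra of `R[W]` containing the
set `M`. -/
def diffClosure {k R ι : Type*} [CommRing k] [CommRing R] [Algebra k R]
    (D : ι → Derivation k R R) (M : Set (Polynomial R)) : Subalgebra R (Polynomial R) :=
  sInf {G : Subalgebra R (Polynomial R) | M ⊆ ↑G ∧ Graded G ∧ DiffClosed D G}

/-- The image `ψ(G)` of a Rees algebra `G` over `R` under a homomorphism (arc) `ψ : R → K⟦t⟧`: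
the Rees algebra over `K⟦t⟧` generated by all `ψ(g) W^l` for `g W^l` a homogeneous element of
`G` with `ψ(g) ≠ 0`. -/
def arcImage {R A : Type*} [CommRing R] [CommRing A] (ψ : R → A)
    (G : Subalgebra R (Polynomial R)) : Subalgebra A (Polynomial A) :=
  Algebra.adjoin A {p : Polynomial A | ∃ (g : R) (l : ℕ),
    (C g * X ^ l : Polynomial R) ∈ G ∧ ψ g ≠ 0 ∧ p = C (ψ g) * X ^ l}

/-- The order `ord(ψ)` of an arc `ψ : R → K⟦t⟧`: the largest `n` such that
`ψ(m) ⊆ t^n` (`t` being the ideal `tI`). -/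
def homOrd {R A : Type*} [CommRing R] [CommRing A] (m : Ideal R) (tI : Ideal A)
    (ψ : R → A) : ℕ :=
  sSup {n : ℕ | ∀ s ∈ m, ψ s ∈ tI ^ n}

/-- The maximal ideal `(t)` of `K⟦t⟧`. -/
def tId (K : Type*) [CommRing K] : Ideal (PowerSeries K) :=
  Ideal.span {(PowerSeries.X : PowerSeries K)}

/-- The `t`-adic order on `K⟦t⟧`. -/
def tOrd {K : Type*} [CommRing K] (g : PowerSeries K) : ℕ :=
  adicOrder (tId K) g

/-- The family of ideals `I_l` of the graded algebra `G = ⊕ I_l W^l`. -/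
def idealFam {R : Type*} [CommRing R] (G : Subalgebra R (Polynomial R)) (l : ℕ) : Ideal R :=
  Submodule.comap (Polynomial.monomial l : R →ₗ[R] Polynomial R) (Subalgebra.toSubmodule G)

/-- The closed point of the local ring `(R, m)` belongs to the singular locus of
`G = ⊕ I_l W^l`, i.e. `ν(I_l) ≥ l` for all `l ≥ 1`. -/
def SingFam {R : Type*} [CommRing R] (m : Ideal R) (I : ℕ → Ideal R) : Prop :=
  ∀ l : ℕ, 1 ≤ l → I l ≤ m ^ l

/-- The transform `⊕ (I_l · T^{-l}) W^l` of a Rees algebra `⊕ I_l W^l` over a DVR with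
uniformizer `T` (when the closed point lies in the singular locus, `I_l ⊆ (T^l)` and
`I_l · T^{-l} = (I_l : (T^l))`). -/
def transformFam {R : Type*} [CommRing R] (T : R) (I : ℕ → Ideal R) : ℕ → Ideal R :=
  fun l => (I l).colon (Ideal.span {T ^ l})

/-- The persistance: the least number `κ` of transforms needed so that the closed point no
longer lies in the singular locus. -/
def persist {R : Type*} [CommRing R] (m : Ideal R) (T : R)
    (G : Subalgebra R (Polynomial R)) : ℕ :=
  sInf {κ : ℕ | ¬ SingFam m ((transformFam T)^[κ] (idealFam G))}

/-- The set of elements of a ring integral over a subset `s` (monic equation with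
coefficients in `s`). -/
def intClos {A : Type*} [CommRing A] (s : Set A) : Set A :=
  {p : A | ∃ q : Polynomial A, q.Monic ∧ (∀ n, q.coeff n ∈ s) ∧ Polynomial.eval p q = 0}


/-- The monic polynomial `f = x^b + B_{b-2} x^{b-2} + ⋯ + B_1 x + B_0` with coefficients
`B_j = Bc j` (only `j ≤ b - 2` is relevant). -/
def minPolyOf {S : Type*} [CommRing S] (b : ℕ) (Bc : ℕ → S) : Polynomial S :=
  Polynomial.X ^ b + ∑ j ∈ Finset.range (b - 1), Polynomial.C (Bc j) * Polynomial.X ^ j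


/-- The maximal ideal `(z_1, …, z_d)` of the polynomial ring `k[z_1, …, z_d]`
(the kernel of evaluation at the origin). -/
def mPoly (k : Type) [Field k] (d : ℕ) : Ideal (MvPolynomial (Fin d) k) :=
  RingHom.ker (MvPolynomial.aeval (fun _ => (0 : k)) : MvPolynomial (Fin d) k →ₐ[k] k)

instance {k : Type} [Field k] {d : ℕ} : (mPoly k d).IsMaximal :=
  RingHom.ker_isMaximal_of_surjective _ (fun a => ⟨MvPolynomial.C a, by simp⟩)

instance {k : Type} [Field k] {d : ℕ} : (mPoly k d).IsPrime :=
  (inferInstance : (mPoly k d).IsMaximal).isPrime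

/-- `IsSLoc k d S` says that `S` is (identified with) the localization of `k[z_1, …, z_d]`
at the maximal ideal `(z_1, …, z_d)`. -/
abbrev IsSLoc (k : Type) [Field k] (d : ℕ) (S : Type) [CommRing S]
    [Algebra (MvPolynomial (Fin d) k) S] : Prop :=
  IsLocalization.AtPrime S (mPoly k d)

/-- The element `z_j` of `S`. -/
def zvar (k : Type) [Field k] (d : ℕ) (S : Type) [CommRing S]
    [Algebra (MvPolynomial (Fin d) k) S] (j : Fin d) : S :=
  algebraMap (MvPolynomial (Fin d) k) S (MvPolynomial.X j)

/-- The maximal ideal `m = (z_1, …, z_d)` of the local ring `S`. -/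
def mS (k : Type) [Field k] (d : ℕ) (S : Type) [CommRing S]
    [Algebra (MvPolynomial (Fin d) k) S] : Ideal S :=
  (mPoly k d).map (algebraMap (MvPolynomial (Fin d) k) S)



theorem mem_diffClosure_of_mem {k R ι : Type*} [CommRing k] [CommRing R] [Algebra k R]
    (D : ι → Derivation k R R) (M : Set (Polynomial R)) {p : Polynomial R} (hp : p ∈ M) :
    p ∈ diffClosure D M := by
  rw [diffClosure, Algebra.mem_sInf]
  intro G hG
  exact hG.1 hp

theorem graded_diffClosure {k R ι : Type*} [CommRing k] [CommRing R] [Algebra k R]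
    (D : ι → Derivation k R R) (M : Set (Polynomial R)) : Graded (diffClosure D M) := by
  intro p hp n
  rw [diffClosure, Algebra.mem_sInf] at hp ⊢
  intro G hG
  exact hG.2.1 p (hp G hG) n

theorem diffClosed_diffClosure {k R ι : Type*} [CommRing k] [CommRing R] [Algebra k R]
    (D : ι → Derivation k R R) (M : Set (Polynomial R)) : DiffClosed D (diffClosure D M) := by
  constructor
  · intro f l hl hp
    rw [diffClosure, Algebra.mem_sInf] at hp ⊢
    intro G hG
    exact hG.2.2.1 f l hl (hp G hG)
  · intro f l j hp
    rw [diffClosure, Algebra.mem_sInf] at hp ⊢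
    intro G hG
    exact hG.2.2.2 f l j (hp G hG)

theorem mem_of_coeff_mem {R : Type*} [CommRing R] (G : Subalgebra R (Polynomial R))
    (p : Polynomial R) (h : ∀ n, (C (p.coeff n) * X ^ n : Polynomial R) ∈ G) : p ∈ G := by
  rw [p.as_sum_range_C_mul_X_pow]
  exact Subalgebra.sum_mem _ fun n _ => h n

theorem mem_idealFam {R : Type*} [CommRing R] (G : Subalgebra R (Polynomial R)) (l : ℕ) (r : R) :
    r ∈ idealFam G l ↔ (C r * X ^ l : Polynomial R) ∈ G := by
  rw [C_mul_X_pow_eq_monomial]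
  rfl

theorem idealFam_zero_mem {R : Type*} [CommRing R] (G : Subalgebra R (Polynomial R)) (r : R) :
    r ∈ idealFam G 0 := by
  rw [mem_idealFam]
  simpa using G.algebraMap_mem r

theorem idealFam_mul {R : Type*} [CommRing R] (G : Subalgebra R (Polynomial R)) {l m : ℕ} {r s : R}
    (hr : r ∈ idealFam G l) (hs : s ∈ idealFam G m) : r * s ∈ idealFam G (l + m) := by
  rw [mem_idealFam] at *
  have := G.mul_mem hr hs
  convert this using 1
  rw [C_mul, pow_add]; ring

theorem idealFam_anti {k R ι : Type*} [CommRing k] [CommRing R] [Algebra k R]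
    {D : ι → Derivation k R R} {G : Subalgebra R (Polynomial R)} (hG : DiffClosed D G)
    {l m : ℕ} (h : l ≤ m) {r : R} (hr : r ∈ idealFam G m) : r ∈ idealFam G l := by
  induction m, h using Nat.le_induction with
  | base => exact hr
  | succ m hm ih =>
    apply ih
    rcases Nat.eq_zero_or_pos m with rfl | h0
    · exact idealFam_zero_mem G r
    · rw [mem_idealFam] at *
      exact hG.1 r m h0 hr

/-- The algebra `⊕_l (∑_i I_{l-i} x^i) W^l` over `S[x]`. -/
def bigAlg {k S ι : Type*} [CommRing k] [CommRing S] [Algebra k S]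
    (D : ι → Derivation k S S) (H : Subalgebra S (Polynomial S)) (hH : DiffClosed D H) :
    Subalgebra (Polynomial S) (Polynomial (Polynomial S)) where
  carrier := {P | ∀ l i, (P.coeff l).coeff i ∈ idealFam H (l - i)}
  mul_mem' := by
    intro P Q hP hQ l i
    rw [coeff_mul, finsetSum_coeff]
    refine Ideal.sum_mem _ fun a ha => ?_
    rw [coeff_mul]
    refine Ideal.sum_mem _ fun c hc => ?_
    rw [Finset.HasAntidiagonal.mem_antidiagonal] at ha hc
    exact idealFam_anti hH (by omega) (idealFam_mul H (hP a.1 c.1) (hQ a.2 c.2))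
  add_mem' := by
    intro P Q hP hQ l i
    rw [coeff_add, coeff_add]
    exact Ideal.add_mem _ (hP l i) (hQ l i)
  algebraMap_mem' := by
    intro r l i
    change ((C r).coeff l).coeff i ∈ _
    rw [coeff_C]
    split_ifs with h
    · subst h
      rw [Nat.zero_sub]
      exact idealFam_zero_mem _ _
    · simp

theorem mem_bigAlg_monomial {k S ι : Type*} [CommRing k] [CommRing S] [Algebra k S]
    (D : ι → Derivation k S S) (H : Subalgebra S (Polynomial S)) (hH : DiffClosed D H)
    (p : Polynomial S) (l : ℕ) :
    (C p * X ^ l : Polynomial (Polynomial S)) ∈ bigAlg D H hH ↔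
      ∀ i, p.coeff i ∈ idealFam H (l - i) := by
  constructor
  · intro h i
    have := h l i
    rwa [coeff_C_mul_X_pow, if_pos rfl] at this
  · intro h m i
    rw [coeff_C_mul_X_pow]
    split_ifs with e
    · rw [e]; exact h i
    · simp

theorem coeff_minPolyOf {S : Type*} [CommRing S] (b : ℕ) (Bc : ℕ → S) (n : ℕ) :
    (minPolyOf b Bc).coeff n = (if n = b then 1 else 0) + (if n < b - 1 then Bc n else 0) := by
  simp [minPolyOf, coeff_X_pow, finsetSum_coeff]

theorem Dx_eq {k S : Type*} [CommRing k] [CommRing S] [Algebra k S]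
    (Dx : Derivation k (Polynomial S) (Polynomial S))
    (hDxC : ∀ s : S, Dx (Polynomial.C s) = 0)
    (hDxX : Dx (Polynomial.X : Polynomial S) = 1) (p : Polynomial S) : Dx p = derivative p := by
  induction p using Polynomial.induction_on' with
  | add p q hp hq => rw [map_add, map_add, hp, hq]
  | monomial n a =>
    rw [← C_mul_X_pow_eq_monomial, Derivation.leibniz, Derivation.leibniz_pow, hDxC, hDxX]
    simp [derivative_X_pow]

theorem Dz_coeff {k S : Type*} [CommRing k] [CommRing S] [Algebra k S]
    (Dz : Derivation k (Polynomial S) (Polynomial S)) (D : Derivation k S S)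
    (hC : ∀ s : S, Dz (Polynomial.C s) = C (D s))
    (hX : Dz (Polynomial.X : Polynomial S) = 0) (p : Polynomial S) (i : ℕ) :
    (Dz p).coeff i = D (p.coeff i) := by
  induction p using Polynomial.induction_on' with
  | add p q hp hq => rw [map_add, coeff_add, coeff_add, map_add, hp, hq]
  | monomial n a =>
    rw [← C_mul_X_pow_eq_monomial, Derivation.leibniz, Derivation.leibniz_pow, hC, hX]
    rw [smul_zero, smul_zero, smul_zero, zero_add, smul_eq_mul, mul_comm, coeff_C_mul_X_pow,
      coeff_C_mul_X_pow]
    split_ifs <;> simp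

theorem nat_unit (k : Type*) [Field k] [CharZero k] {S : Type*} [CommRing S] [Algebra k S]
    (n : ℕ) (hn : n ≠ 0) : ∃ u : S, u * (n : S) = 1 := by
  refine ⟨algebraMap k S ((n : k)⁻¹), ?_⟩
  rw [← map_natCast (algebraMap k S) n, ← map_mul, inv_mul_cancel₀ (by exact_mod_cast hn), map_one]

section Statement10

variable (k : Type) [Field k] [CharZero k] (d : ℕ)
variable (S : Type) [CommRing S] [IsDomain S] [Algebra (MvPolynomial (Fin d) k) S]
  [Algebra k S] [IsScalarTower k (MvPolynomial (Fin d) k) S]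

/-- `Diff(S[x][f W^b])`, the differential closure over `S[x]` of the Rees algebra
generated by `f W^b`, relative to the derivations `∂/∂x` (= `Dx`) and `∂/∂z_j` (= `Dz j`). -/
def bigDiff (Dz : Fin d → Derivation k (Polynomial S) (Polynomial S))
    (Dx : Derivation k (Polynomial S) (Polynomial S)) (b : ℕ) (Bc : ℕ → S) :
    Subalgebra (Polynomial S) (Polynomial (Polynomial S)) :=
  diffClosure (fun o : Option (Fin d) => o.elim Dx Dz)
    {(Polynomial.C (minPolyOf b Bc) * Polynomial.X ^ b : Polynomial (Polynomial S))}

/-- `Diff(S[x][f W^b]) ∩ S[W]`, the elimination algebra over `S` of the hypersurface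
`V(f)` relative to the projection forgetting `x`. -/
def elimOfBig (Dz : Fin d → Derivation k (Polynomial S) (Polynomial S))
    (Dx : Derivation k (Polynomial S) (Polynomial S)) (b : ℕ) (Bc : ℕ → S) :
    Subalgebra S (Polynomial S) :=
  Subalgebra.comap (Polynomial.mapAlgHom (Algebra.ofId S (Polynomial S)))
    (Subalgebra.restrictScalars S (bigDiff k d S Dz Dx b Bc))

/-- `Diff_S(S[B_{b-2} W^2, …, B_0 W^b])`, the differential closure over `S`. -/
def elimOfCoeffs (DS : Fin d → Derivation k S S) (b : ℕ) (Bc : ℕ → S) :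
    Subalgebra S (Polynomial S) :=
  diffClosure DS {p : Polynomial S | ∃ i ≤ b - 2,
    p = Polynomial.C (Bc i) * Polynomial.X ^ (b - i)}


theorem elimOfBig_eq
    (DS : Fin d → Derivation k S S)
    (Dz : Fin d → Derivation k (Polynomial S) (Polynomial S))
    (hDzC : ∀ (j : Fin d) (s : S), Dz j (Polynomial.C s) = Polynomial.C (DS j s))
    (hDzX : ∀ j : Fin d, Dz j (Polynomial.X : Polynomial S) = 0)
    (Dx : Derivation k (Polynomial S) (Polynomial S))
    (hDxC : ∀ s : S, Dx (Polynomial.C s) = 0)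
    (hDxX : Dx (Polynomial.X : Polynomial S) = 1)
    (b : ℕ) (hb : 2 ≤ b) (Bc : ℕ → S) :
    elimOfBig k d S Dz Dx b Bc = elimOfCoeffs k d S DS b Bc := by
  have hmem : ∀ p : Polynomial S, p ∈ elimOfBig k d S Dz Dx b Bc ↔
      p.map C ∈ bigDiff k d S Dz Dx b Bc := fun p => Iff.rfl
  have hmap : ∀ (s : S) (l : ℕ), (C s * X ^ l : Polynomial S).map C
      = (C (C s) * X ^ l : Polynomial (Polynomial S)) := by
    intro s l; simp
  apply le_antisymm
  · have hH : DiffClosed DS (elimOfCoeffs k d S DS b Bc) := diffClosed_diffClosure _ _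
    have hle : bigDiff k d S Dz Dx b Bc ≤ bigAlg DS _ hH := by
      apply sInf_le
      refine ⟨?_, ?_, ?_, ?_⟩
      · rw [Set.singleton_subset_iff, SetLike.mem_coe, mem_bigAlg_monomial]
        intro i
        rw [coeff_minPolyOf]
        refine Ideal.add_mem _ ?_ ?_
        · split_ifs with h
          · rw [h, Nat.sub_self]; exact idealFam_zero_mem _ _
          · simp
        · split_ifs with h
          · rw [mem_idealFam]
            exact mem_diffClosure_of_mem _ _ ⟨i, by omega, rfl⟩
          · simp
      · intro P hP n
        rw [mem_bigAlg_monomial]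
        exact hP n
      · intro p l hl hp
        rw [mem_bigAlg_monomial] at hp ⊢
        intro i
        exact idealFam_anti hH (by omega) (hp i)
      · intro p l j hp
        rw [mem_bigAlg_monomial] at hp ⊢
        intro i
        cases j with
        | none =>
          change (Dx p).coeff i ∈ _
          rw [Dx_eq Dx hDxC hDxX, coeff_derivative]
          have := hp (i + 1)
          rw [Nat.add_sub_add_right] at this
          exact Ideal.mul_mem_right _ _ this
        | some j =>
          change (Dz j p).coeff i ∈ _
          rw [Dz_coeff (Dz j) (DS j) (hDzC j) (hDzX j)]
          by_cases h : i ≤ l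
          · have := hp i
            rw [Nat.succ_sub h, mem_idealFam] at this
            rw [mem_idealFam]
            exact hH.2 _ _ _ this
          · rw [Nat.sub_eq_zero_of_le (by omega)]
            exact idealFam_zero_mem _ _
    intro p hp
    have h2 := hle ((hmem p).1 hp)
    apply mem_of_coeff_mem
    intro n
    have := h2 n 0
    rwa [coeff_map, coeff_C_zero, Nat.sub_zero, mem_idealFam] at this
  · have hG : DiffClosed (fun o : Option (Fin d) => o.elim Dx Dz) (bigDiff k d S Dz Dx b Bc) :=
      diffClosed_diffClosure _ _
    have hgr : Graded (bigDiff k d S Dz Dx b Bc) := graded_diffClosure _ _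
    apply sInf_le
    refine ⟨?_, ?_, ?_, ?_⟩
    · set f := minPolyOf b Bc with hf
      set I := idealFam (bigDiff k d S Dz Dx b Bc) with hI
      have hfb : f ∈ I b := by
        rw [hI, mem_idealFam]; exact mem_diffClosure_of_mem _ _ rfl
      have hder : ∀ i n, i + n = b → derivative^[i] f ∈ I n := by
        intro i
        induction i with
        | zero => intro n hn; rw [zero_add] at hn; subst hn; exact hfb
        | succ i ih =>
          intro n hn
          have := ih (n + 1) (by omega)
          rw [hI, mem_idealFam] at this
          have := hG.2 _ _ none this
          rw [Function.iterate_succ_apply', ← Dx_eq Dx hDxC hDxX, hI, mem_idealFam]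
          exact this
      have hcancel : ∀ (n l : ℕ) (p : Polynomial S), n ≠ 0 → C (n : S) * p ∈ I l → p ∈ I l := by
        intro n l p hn h
        obtain ⟨u, hu⟩ := nat_unit k (S := S) n hn
        have := Ideal.mul_mem_left _ (C u) h
        rwa [← mul_assoc, ← C_mul, hu, C_1, one_mul] at this
      have hX : (X : Polynomial S) ∈ I 1 := by
        have h1 := hder (b - 1) 1 (by omega)
        apply hcancel (b.descFactorial (b - 1)) 1 X
        · rw [Ne, Nat.descFactorial_eq_zero_iff_lt]; omega
        · convert h1 using 1
          ext m
          rw [coeff_iterate_derivative, coeff_C_mul, coeff_X, hf, coeff_minPolyOf]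
          by_cases hm : m = 1
          · subst hm
            have e : 1 + (b - 1) = b := by omega
            have e' : ¬ b < b - 1 := by omega
            simp [e, e']
          · have e1 : ¬ (m + (b - 1) = b) := by omega
            have e2 : ¬ (1 = m) := by omega
            simp [e1, e2]
      have hXp : ∀ m, (X ^ m : Polynomial S) ∈ I m := by
        intro m
        induction m with
        | zero => exact idealFam_zero_mem _ _
        | succ m ih => rw [pow_succ]; exact idealFam_mul _ ih hX
      have key : ∀ n, ∀ i, i + n = b → C (f.coeff i) ∈ I n := by
        intro n
        induction n using Nat.strong_induction_on with
        | _ n ih =>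
        intro i hin
        have h1 := hder i n hin
        have hdeg : (derivative^[i] f).natDegree < n + 1 := by
          rw [Nat.lt_succ_iff, natDegree_le_iff_coeff_eq_zero]
          intro N hN
          rw [coeff_iterate_derivative, hf, coeff_minPolyOf, if_neg (by omega), if_neg (by omega)]
          simp
        rw [as_sum_range_C_mul_X_pow' _ hdeg, Finset.sum_range_succ'] at h1
        have h2 : ∑ m ∈ Finset.range n, C ((derivative^[i] f).coeff (m + 1)) * X ^ (m + 1) ∈ I n := by
          refine Ideal.sum_mem _ fun m hm => ?_
          rw [Finset.mem_range] at hm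
          have h3 := idealFam_mul _ (ih (n - (m + 1)) (by omega) (i + (m + 1)) (by omega))
            (hXp (m + 1))
          rw [Nat.sub_add_cancel (by omega)] at h3
          rw [coeff_iterate_derivative, nsmul_eq_mul, C_mul, mul_assoc, add_comm (m + 1) i]
          exact Ideal.mul_mem_left _ _ h3
        have h4 := (Ideal.add_mem_iff_right _ h2).1 h1
        rw [coeff_iterate_derivative, zero_add, nsmul_eq_mul, C_mul, pow_zero, mul_one] at h4
        refine hcancel _ _ _ ?_ h4
        rw [Ne, Nat.descFactorial_eq_zero_iff_lt]; omega
      rintro p ⟨i, hi, rfl⟩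
      rw [SetLike.mem_coe, hmem, hmap, ← mem_idealFam]
      have := key (b - i) i (by omega)
      rwa [hf, coeff_minPolyOf, if_neg (by omega), if_pos (by omega), zero_add] at this
    · intro p hp n
      rw [hmem] at hp ⊢
      rw [hmap]
      have := hgr _ hp n
      rwa [coeff_map] at this
    · intro s l hl hs
      rw [hmem, hmap] at hs ⊢
      exact hG.1 _ l hl hs
    · intro s l j hs
      rw [hmem, hmap] at hs ⊢
      have := hG.2 _ l (some j) hs
      rw [← hDzC]
      exact this

/-- (Lemma `lema:generadores_algebra2`.)  For `f = x^b + B_{b-2} x^{b-2} + ⋯ + B_0 ∈ S[x]`,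
the Rees algebra `Diff(S[x][f W^b]) ∩ S[W]` over `S` (the elimination algebra of the
hypersurface `V(f)` relative to the projection forgetting `x`) coincides, up to integral
closure inside `Frac(S)[W]`, with `Diff_S(S[B_{b-2} W^2, …, B_0 W^b])`: the two have the
same integral closure in `Frac(S)[W]`. -/
theorem elimination_algebra_of_hypersurface_up_to_integral_closure
    [IsSLoc k d S] (hd : 1 ≤ d)
    (DS : Fin d → Derivation k S S)
    (hDS : ∀ i j : Fin d, DS j (zvar k d S i) = if i = j then 1 else 0)
    (Dz : Fin d → Derivation k (Polynomial S) (Polynomial S))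
    (hDzC : ∀ (j : Fin d) (s : S), Dz j (Polynomial.C s) = Polynomial.C (DS j s))
    (hDzX : ∀ j : Fin d, Dz j (Polynomial.X : Polynomial S) = 0)
    (Dx : Derivation k (Polynomial S) (Polynomial S))
    (hDxC : ∀ s : S, Dx (Polynomial.C s) = 0)
    (hDxX : Dx (Polynomial.X : Polynomial S) = 1)
    (b : ℕ) (hb : 2 ≤ b) (Bc : ℕ → S) :
    intClos (Subalgebra.map (Polynomial.mapAlgHom (Algebra.ofId S (FractionRing S)))
        (elimOfBig k d S Dz Dx b Bc) : Set (Polynomial (FractionRing S))) =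
      intClos (Subalgebra.map (Polynomial.mapAlgHom (Algebra.ofId S (FractionRing S)))
        (elimOfCoeffs k d S DS b Bc) : Set (Polynomial (FractionRing S))) := by
  rw [elimOfBig_eq k d S DS Dz hDzC hDzX Dx hDxC hDxX b hb Bc]

end Statement10

end NashMult
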